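/- arXiv:2002.01610 — 2 statements merged into one kernel-verified Lean document; each statement's English description precedes it below -/
import Mathlib

section
/- Let 𝒜 be an output AOE of the simplification algorithm and let Opt be an optimal AOE with Opt ≡ 𝒜, with common task set 𝒯. For distinct tasks T, T' ∈ 𝒯: if St_𝒜(T) ≠ St_𝒜(T') then St_Opt(T) ≠ St_Opt(T'); and if End_𝒜(T) ≠ End_𝒜(T') then End_Opt(T) ≠ End_Opt(T'). -/
namespace AOEPaper

/-- An activity-on-edge graph: a directed multigraph on the vertex set `verts`,
whose task edges are indexed by the type `T` (the distinct task labels), each task `t`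
being an edge from `St t` to `En t`, together with a multiset `unl` of unlabeled edges. -/
structure AOE (V T : Type) where
  verts : Finset V
  St : T → V
  En : T → V
  stMem : ∀ t, St t ∈ verts
  enMem : ∀ t, En t ∈ verts
  unl : Multiset (V × V)
  unlMem : ∀ e ∈ unl, e.1 ∈ verts ∧ e.2 ∈ verts

/-- One-step adjacency: an unlabeled edge or a task edge from `a` to `b`. -/
def AOE.adj {V T : Type} (G : AOE V T) (a b : V) : Prop :=
  (a, b) ∈ G.unl ∨ ∃ t, G.St t = a ∧ G.En t = b

/-- The graph has no directed cycle. -/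
def AOE.Acyclic {V T : Type} (G : AOE V T) : Prop :=
  ∀ v : V, ¬ Relation.TransGen G.adj v v

/-- Task `t` reaches task `t'`: `En t = St t'` or there is a directed path from
`En t` to `St t'` (intended only for `t ≠ t'`). -/
def AOE.reach {V T : Type} (G : AOE V T) (t t' : T) : Prop :=
  Relation.ReflTransGen G.adj (G.En t) (G.St t')

/-- A sequence of tasks in which each task reaches the next. -/
def AOE.chain {V T : Type} (G : AOE V T) (l : List T) : Prop :=
  l.Chain' fun t t' => t ≠ t' ∧ G.reach t t'

/-- A potential critical path: a maximal sequence of tasks in which each task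
reaches the next (not a subsequence of any other such sequence). -/
def AOE.critPath {V T : Type} (G : AOE V T) (l : List T) : Prop :=
  G.chain l ∧ ∀ l' : List T, G.chain l' → l.Sublist l' → l' = l

/-- Two AOEs with the same task labels are equivalent if they have the same set of
potential critical paths. -/
def AOE.Equiv {V W T : Type} (G : AOE V T) (H : AOE W T) : Prop :=
  ∀ l : List T, G.critPath l ↔ H.critPath l

/-- An AOE is optimal if it minimizes the number of vertices in its equivalence class. -/
def Optimal {W T : Type} (G : AOE W T) : Prop :=
  ∀ (U : Type) (H : AOE U T), H.Acyclic → AOE.Equiv G H → G.verts.card ≤ H.verts.card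

/-- The vertex map replacing `v` by `u`. -/
def mergeV {V : Type} [DecidableEq V] (u v x : V) : V := if x = v then u else x

theorem mergeV_mem {V : Type} [DecidableEq V] {S : Finset V} (u v x : V) (hx : x ∈ S) :
    mergeV u v x ∈ insert u (S.erase v) := by
  unfold mergeV
  split_ifs with h
  · exact Finset.mem_insert_self _ _
  · exact Finset.mem_insert_of_mem (Finset.mem_erase.mpr ⟨h, hx⟩)

/-- Merge vertices `u` and `v` into the single vertex `u`. -/
def AOE.merge {V T : Type} [DecidableEq V] (G : AOE V T) (u v : V) : AOE V T where
  verts := insert u (G.verts.erase v)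
  St t := mergeV u v (G.St t)
  En t := mergeV u v (G.En t)
  stMem t := mergeV_mem u v (G.St t) (G.stMem t)
  enMem t := mergeV_mem u v (G.En t) (G.enMem t)
  unl := G.unl.map fun e => (mergeV u v e.1, mergeV u v e.2)
  unlMem := by
    intro e he
    rw [Multiset.mem_map] at he
    obtain ⟨a, ha, rfl⟩ := he
    obtain ⟨h1, h2⟩ := G.unlMem a ha
    exact ⟨mergeV_mem u v a.1 h1, mergeV_mem u v a.2 h2⟩

/-- Delete one copy of the unlabeled edge `(u, v)`. -/
def AOE.delUnl {V T : Type} [DecidableEq V] (G : AOE V T) (u v : V) : AOE V T where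
  verts := G.verts
  St := G.St
  En := G.En
  stMem := G.stMem
  enMem := G.enMem
  unl := G.unl.erase (u, v)
  unlMem := fun e he => G.unlMem e (Multiset.mem_of_mem_erase he)

/-- Rule 1 (outgoing version): `u` and `v` are distinct vertices with no outgoing task
edges and precisely the same outgoing neighbors. -/
def Rule1OutCond {V T : Type} (G : AOE V T) (u v : V) : Prop :=
  u ∈ G.verts ∧ v ∈ G.verts ∧ u ≠ v ∧
    (∀ t, G.St t ≠ u) ∧ (∀ t, G.St t ≠ v) ∧ ∀ w, G.adj u w ↔ G.adj v w

/-- Rule 1 (incoming version): `u` and `v` are distinct vertices with no incoming task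
edges and precisely the same incoming neighbors. -/
def Rule1InCond {V T : Type} (G : AOE V T) (u v : V) : Prop :=
  u ∈ G.verts ∧ v ∈ G.verts ∧ u ≠ v ∧
    (∀ t, G.En t ≠ u) ∧ (∀ t, G.En t ≠ v) ∧ ∀ w, G.adj w u ↔ G.adj w v

/-- Rule 2: `(u, v)` is an unlabeled edge and there is another directed path from `u`
to `v` not using this edge. -/
def Rule2Cond {V T : Type} [DecidableEq V] (G : AOE V T) (u v : V) : Prop :=
  (u, v) ∈ G.unl ∧ Relation.TransGen (G.delUnl u v).adj u v

/-- Rule 3: `(u, v)` is an unlabeled edge such that (i) there is no other path from `u`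
to `v`; (ii) if `u` has an outgoing task then `v` has no incoming edge other than `(u,v)`;
(iii) if `v` has an incoming task then `u` has no outgoing edge other than `(u,v)`;
(iv) every incoming neighbor of `v` has a path to every outgoing neighbor of `u`. -/
def Rule3Cond {V T : Type} [DecidableEq V] (G : AOE V T) (u v : V) : Prop :=
  (u, v) ∈ G.unl ∧
  (¬ Relation.TransGen (G.delUnl u v).adj u v) ∧
  ((∃ t, G.St t = u) → (∀ t, G.En t ≠ v) ∧ ∀ w, (w, v) ∈ G.unl → w = u) ∧
  ((∃ t, G.En t = v) → (∀ t, G.St t ≠ u) ∧ ∀ w, (u, w) ∈ G.unl → w = v) ∧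
  ∀ w z, G.adj w v → G.adj u z → Relation.ReflTransGen G.adj w z

/-- One application of a simplification rule. -/
inductive Step {V T : Type} [DecidableEq V] : AOE V T → AOE V T → Prop
  | rule1out {G : AOE V T} (u v : V) : Rule1OutCond G u v → Step G (G.merge u v)
  | rule1in {G : AOE V T} (u v : V) : Rule1InCond G u v → Step G (G.merge u v)
  | rule2 {G : AOE V T} (u v : V) : Rule2Cond G u v → Step G (G.delUnl u v)
  | rule3 {G : AOE V T} (u v : V) : Rule3Cond G u v → Step G ((G.delUnl u v).merge u v)

/-- A canonical AOE: the naive expansion of an activity-on-node graph. Each task has its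
own pair of endpoint vertices, all pairwise distinct; there are a global start vertex `s`
and a global end vertex `e`; unlabeled edges other than those leaving `s` or entering `e`
go from end vertices of tasks to start vertices of tasks; `s` has unlabeled edges to
exactly the vertices whose only incoming edges come from `s`, and `e` has unlabeled edges
from exactly the vertices whose only outgoing edges go to `e`. -/
def Canonical {V T : Type} [DecidableEq V] [Fintype T] (G : AOE V T) : Prop :=
  G.Acyclic ∧ G.unl.Nodup ∧
  Function.Injective G.St ∧ Function.Injective G.En ∧
  (∀ t t' : T, G.St t ≠ G.En t') ∧
  ∃ s e : V, s ≠ e ∧ s ∈ G.verts ∧ e ∈ G.verts ∧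
    (∀ t, G.St t ≠ s ∧ G.St t ≠ e ∧ G.En t ≠ s ∧ G.En t ≠ e) ∧
    (G.verts =
      insert s (insert e (Finset.image G.St Finset.univ ∪ Finset.image G.En Finset.univ))) ∧
    (∀ a b : V, (a, b) ∈ G.unl → a ≠ s → b ≠ e → (∃ t, G.En t = a) ∧ ∃ t', G.St t' = b) ∧
    (∀ b : V, (s, b) ∈ G.unl ↔
      b ∈ G.verts ∧ b ≠ s ∧ (∀ t, G.En t ≠ b) ∧ ∀ a, (a, b) ∈ G.unl → a = s) ∧
    (∀ a : V, (a, e) ∈ G.unl ↔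
      a ∈ G.verts ∧ a ≠ e ∧ (∀ t, G.St t ≠ a) ∧ ∀ b, (a, b) ∈ G.unl → b = e)

/-- An output AOE: obtained from a canonical AOE by a finite sequence of rule
applications, such that no rule can still be applied. -/
def IsOutput {V T : Type} [DecidableEq V] [Fintype T] (G A : AOE V T) : Prop :=
  Canonical G ∧ Relation.ReflTransGen Step G A ∧ ∀ B : AOE V T, ¬ Step A B

theorem mergeSetV_mem {V : Type} [DecidableEq V] {S : Finset V} (C : Finset V) (c x : V)
    (hx : x ∈ S) : (if x ∈ C then c else x) ∈ insert c (S \ C) := by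
  split_ifs with h
  · exact Finset.mem_insert_self _ _
  · exact Finset.mem_insert_of_mem (Finset.mem_sdiff.mpr ⟨hx, h⟩)

/-- Merge all vertices of `C` into the single vertex `c`. -/
def AOE.mergeSet {V T : Type} [DecidableEq V] (G : AOE V T) (C : Finset V) (c : V) :
    AOE V T where
  verts := insert c (G.verts \ C)
  St t := if G.St t ∈ C then c else G.St t
  En t := if G.En t ∈ C then c else G.En t
  stMem t := mergeSetV_mem C c (G.St t) (G.stMem t)
  enMem t := mergeSetV_mem C c (G.En t) (G.enMem t)
  unl := G.unl.map fun e => (if e.1 ∈ C then c else e.1, if e.2 ∈ C then c else e.2)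
  unlMem := by
    intro e he
    rw [Multiset.mem_map] at he
    obtain ⟨a, ha, rfl⟩ := he
    obtain ⟨h1, h2⟩ := G.unlMem a ha
    exact ⟨mergeSetV_mem C c a.1 h1, mergeSetV_mem C c a.2 h2⟩

open Relation in
/-- Merging along `f` keeps a relation acyclic if no path joins two points of one fibre. -/
theorem acyclic_of_fibre {V : Type} {R R' : V → V → Prop} {f : V → V} {u : V}
    (hlift : ∀ x y, R' x y → ∃ a b, f a = x ∧ f b = y ∧ R a b)
    (hfib : ∀ a b, f a = f b → a = b ∨ f a = u)
    (hK : ∀ p q, f p = f q → ¬ TransGen R p q) (x : V) : ¬ TransGen R' x x := by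
  have key : ∀ x y, TransGen R' x y → (∃ a b, f a = x ∧ f b = y ∧ TransGen R a b) ∨
      ∃ a b p q, f a = x ∧ f b = y ∧ f p = u ∧ f q = u ∧ TransGen R a p ∧ TransGen R q b := by
    intro x y h
    induction h with
    | single h =>
      obtain ⟨a, b, h1, h2, h3⟩ := hlift _ _ h
      exact Or.inl ⟨a, b, h1, h2, .single h3⟩
    | tail _ h ih =>
      obtain ⟨b', c, h1, h2, h3⟩ := hlift _ _ h
      rcases ih with ⟨a, b, e1, e2, e3⟩ | ⟨a, b, p, q, e1, e2, e3, e4, e5, e6⟩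
      · rcases hfib b b' (e2.trans h1.symm) with rfl | hu
        · exact Or.inl ⟨a, c, e1, h2, e3.tail h3⟩
        · exact Or.inr ⟨a, c, b, b', e1, h2, hu, (h1.trans e2.symm).trans hu, e3, .single h3⟩
      · rcases hfib b b' (e2.trans h1.symm) with rfl | hu
        · exact Or.inr ⟨a, c, p, q, e1, h2, e3, e4, e5, e6.tail h3⟩
        · exact absurd e6 (hK _ _ (e4.trans hu.symm))
  intro h
  rcases key _ _ h with ⟨a, b, e1, e2, e3⟩ | ⟨a, b, p, q, e1, e2, e3, e4, e5, e6⟩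
  · exact hK _ _ (e1.trans e2.symm) e3
  · rcases hfib a b (e1.trans e2.symm) with rfl | hu
    · exact hK _ _ (e4.trans e3.symm) (e6.trans e5)
    · exact hK _ _ (hu.trans e3.symm) e5

theorem merge_lift {V T : Type} [DecidableEq V] (G : AOE V T) (u v x y : V)
    (h : (G.merge u v).adj x y) :
    ∃ a b, mergeV u v a = x ∧ mergeV u v b = y ∧ G.adj a b := by
  rcases h with h | ⟨t, h1, h2⟩
  · obtain ⟨⟨a, b⟩, ha, he⟩ := Multiset.mem_map.1 h
    simp only [Prod.mk.injEq] at he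
    exact ⟨a, b, he.1, he.2, Or.inl ha⟩
  · exact ⟨_, _, h1, h2, Or.inr ⟨t, rfl, rfl⟩⟩

theorem merge_adj {V T : Type} [DecidableEq V] (G : AOE V T) (u v a b : V)
    (h : G.adj a b) : (G.merge u v).adj (mergeV u v a) (mergeV u v b) := by
  rcases h with h | ⟨t, h1, h2⟩
  · exact Or.inl (Multiset.mem_map.2 ⟨(a, b), h, rfl⟩)
  · subst h1 h2
    exact Or.inr ⟨t, rfl, rfl⟩

open Relation in
theorem merge_acyclic {V T : Type} [DecidableEq V] (G : AOE V T) (u v : V)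
    (hG : G.Acyclic) (huv : ¬ TransGen G.adj u v) (hvu : ¬ TransGen G.adj v u) :
    (G.merge u v).Acyclic := by
  have hfib : ∀ a b, mergeV u v a = mergeV u v b →
      a = b ∨ ((a = u ∨ a = v) ∧ (b = u ∨ b = v)) := by
    intro a b h
    unfold mergeV at h
    split_ifs at h <;> simp_all
  refine acyclic_of_fibre (u := u) (merge_lift G u v) ?_ ?_
  · intro a b h
    rcases hfib a b h with h | ⟨h | h, _⟩
    · exact Or.inl h
    · right; subst h; simp [mergeV]
    · right; simp [mergeV, h]
  · intro p q h hpq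
    rcases hfib p q h with rfl | ⟨rfl | rfl, rfl | rfl⟩
    · exact hG _ hpq
    · exact hG _ hpq
    · exact huv hpq
    · exact hvu hpq
    · exact hG _ hpq

theorem delUnl_adj {V T : Type} [DecidableEq V] (G : AOE V T) (u v a b : V)
    (h : (G.delUnl u v).adj a b) : G.adj a b := by
  rcases h with h | h
  · exact Or.inl (Multiset.mem_of_mem_erase h)
  · exact Or.inr h

theorem adj_delUnl {V T : Type} [DecidableEq V] (G : AOE V T) (u v a b : V)
    (h : G.adj a b) : (G.delUnl u v).adj a b ∨ (a = u ∧ b = v) := by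
  by_cases hab : (a, b) = (u, v)
  · right; simpa using hab
  · rcases h with h | h
    · exact Or.inl (Or.inl ((Multiset.mem_erase_of_ne hab).2 h))
    · exact Or.inl (Or.inr h)

open Relation in
/-- The invariant kept by all the rules. -/
def Inv {V T : Type} (G : AOE V T) : Prop :=
  G.Acyclic ∧ ∃ s e : V, (∀ v ∈ G.verts, ReflTransGen G.adj s v) ∧
    (∀ v ∈ G.verts, ReflTransGen G.adj v e) ∧
    ∀ x y, (x, y) ∈ G.unl → (x = s ∨ ∃ t, G.En t = x) ∧ (y = e ∨ ∃ t, G.St t = y)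

open Relation in
theorem inv_merge {V T : Type} [DecidableEq V] (G H : AOE V T) (u v : V) (hv : v ∈ G.verts)
    (hG : Inv G) (hverts : H.verts = G.verts) (hSt : H.St = G.St) (hEn : H.En = G.En)
    (hunl : ∀ e ∈ H.unl, e ∈ G.unl)
    (hadj : ∀ a b, G.adj a b → H.adj a b ∨ (a = u ∧ b = v))
    (hac : (H.merge u v).Acyclic) : Inv (H.merge u v) := by
  obtain ⟨-, s, e, hs, he, hu⟩ := hG
  have hr : ∀ a b, ReflTransGen G.adj a b →
      ReflTransGen (H.merge u v).adj (mergeV u v a) (mergeV u v b) := by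
    intro a b h
    induction h with
    | refl => exact .refl
    | tail _ h ih =>
      rcases hadj _ _ h with h | ⟨h1, h2⟩
      · exact ih.tail (merge_adj H u v _ _ h)
      · have : mergeV u v u = mergeV u v v := by simp [mergeV]
        rw [h1] at ih
        rw [h2, ← this]
        exact ih
  have hsurj : ∀ x ∈ (H.merge u v).verts, ∃ a ∈ G.verts, mergeV u v a = x := by
    intro x hx
    rcases Finset.mem_insert.1 hx with rfl | hx
    · exact ⟨v, hv, by simp [mergeV]⟩
    · rw [hverts] at hx
      obtain ⟨h1, h2⟩ := Finset.mem_erase.1 hx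
      exact ⟨x, h2, by simp [mergeV, h1]⟩
  refine ⟨hac, mergeV u v s, mergeV u v e, ?_, ?_, ?_⟩
  · intro x hx
    obtain ⟨a, ha, rfl⟩ := hsurj x hx
    exact hr _ _ (hs a ha)
  · intro x hx
    obtain ⟨a, ha, rfl⟩ := hsurj x hx
    exact hr _ _ (he a ha)
  · intro x y hxy
    obtain ⟨⟨a, b⟩, hab, h⟩ := Multiset.mem_map.1 hxy
    simp only [Prod.mk.injEq] at h
    obtain ⟨rfl, rfl⟩ := h
    obtain ⟨h1, h2⟩ := hu a b (hunl _ hab)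
    constructor
    · rcases h1 with rfl | ⟨t, rfl⟩
      · exact Or.inl rfl
      · exact Or.inr ⟨t, by simp [AOE.merge, hEn]⟩
    · rcases h2 with rfl | ⟨t, rfl⟩
      · exact Or.inl rfl
      · exact Or.inr ⟨t, by simp [AOE.merge, hSt]⟩

open Relation in
theorem inv_step {V T : Type} [DecidableEq V] (G H : AOE V T) (h : Step G H) (hG : Inv G) :
    Inv H := by
  have hac := hG.1
  cases h with
  | rule1out u v hc =>
    obtain ⟨hu, hv, huv, h1, h2, h3⟩ := hc
    refine inv_merge G G u v hv hG rfl rfl rfl (fun _ h => h) (fun _ _ h => Or.inl h) ?_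
    refine merge_acyclic G u v hac ?_ ?_
    · intro h
      obtain ⟨c, hc1, hc2⟩ := TransGen.head'_iff.1 h
      exact hac c (TransGen.tail' hc2 ((h3 c).1 hc1))
    · intro h
      obtain ⟨c, hc1, hc2⟩ := TransGen.head'_iff.1 h
      exact hac c (TransGen.tail' hc2 ((h3 c).2 hc1))
  | rule1in u v hc =>
    obtain ⟨hu, hv, huv, h1, h2, h3⟩ := hc
    refine inv_merge G G u v hv hG rfl rfl rfl (fun _ h => h) (fun _ _ h => Or.inl h) ?_
    refine merge_acyclic G u v hac ?_ ?_
    · intro h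
      obtain ⟨c, hc1, hc2⟩ := TransGen.tail'_iff.1 h
      exact hac c (TransGen.head' ((h3 c).2 hc2) hc1)
    · intro h
      obtain ⟨c, hc1, hc2⟩ := TransGen.tail'_iff.1 h
      exact hac c (TransGen.head' ((h3 c).1 hc2) hc1)
  | rule2 u v hc =>
    obtain ⟨-, s, e, hs, he, hu⟩ := hG
    have hr : ∀ a b, ReflTransGen G.adj a b → ReflTransGen (G.delUnl u v).adj a b := by
      intro a b h
      induction h with
      | refl => exact .refl
      | tail _ h ih =>
        rcases adj_delUnl G u v _ _ h with h | ⟨rfl, rfl⟩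
        · exact ih.tail h
        · exact ih.trans hc.2.to_reflTransGen
    exact ⟨fun x h => hac x (TransGen.mono (fun a b => delUnl_adj G u v a b) _ _ h), s, e,
      fun x hx => hr _ _ (hs x hx), fun x hx => hr _ _ (he x hx),
      fun x y h => hu x y (Multiset.mem_of_mem_erase h)⟩
  | rule3 u v hc =>
    obtain ⟨h1, h2, -⟩ := hc
    refine inv_merge G (G.delUnl u v) u v (G.unlMem _ h1).2 hG rfl rfl rfl
      (fun _ h => Multiset.mem_of_mem_erase h) (adj_delUnl G u v) ?_
    refine merge_acyclic _ u v ?_ h2 ?_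
    · exact fun x h => hac x (TransGen.mono (fun a b => delUnl_adj G u v a b) _ _ h)
    · intro h
      exact hac v ((TransGen.mono (fun a b => delUnl_adj G u v a b) _ _ h).tail (Or.inl h1))

open Relation in
theorem reach_all {V : Type} (S : Finset V) (R : V → V → Prop) (hR : ∀ v, ¬ TransGen R v v)
    (s : V) (h : ∀ v ∈ S, v = s ∨ ∃ a ∈ S, R a v) : ∀ v ∈ S, ReflTransGen R s v := by
  let r : S → S → Prop := fun x y => TransGen R x y
  haveI : IsTrans S r := ⟨fun _ _ _ h1 h2 => TransGen.trans h1 h2⟩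
  haveI : Std.Irrefl r := ⟨fun x => hR x⟩
  have wf : WellFounded r := Finite.wellFounded_of_trans_of_irrefl r
  have : ∀ x : S, ReflTransGen R s x := by
    intro x
    induction x using wf.induction with
    | _ x ih =>
      rcases h x x.2 with h | ⟨a, ha, hax⟩
      · rw [h]
      · exact (ih ⟨a, ha⟩ (TransGen.single hax)).tail hax
  exact fun v hv => this ⟨v, hv⟩

open Relation in
theorem inv_canonical {V T : Type} [DecidableEq V] [Fintype T] (G : AOE V T)
    (hG : Canonical G) : Inv G := by
  obtain ⟨hac, -, -, -, -, s, e, -, -, -, -, hverts, hun, hs, he⟩ := hG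
  have hstart : ∀ v ∈ G.verts, ReflTransGen G.adj s v := by
    refine reach_all _ _ hac s ?_
    intro v hv
    by_cases hvs : v = s
    · exact Or.inl hvs
    right
    by_cases h1 : ∃ t, G.En t = v
    · obtain ⟨t, ht⟩ := h1
      exact ⟨G.St t, G.stMem t, Or.inr ⟨t, rfl, ht⟩⟩
    by_cases h2 : ∃ a, (a, v) ∈ G.unl
    · obtain ⟨a, ha⟩ := h2
      exact ⟨a, (G.unlMem _ ha).1, Or.inl ha⟩
    push Not at h1 h2
    have := (hs v).2 ⟨hv, hvs, h1, fun a ha => absurd ha (h2 a)⟩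
    exact absurd this (h2 s)
  have hend : ∀ v ∈ G.verts, ReflTransGen (Function.swap G.adj) e v := by
    refine reach_all _ _ ?_ e ?_
    · intro v h
      exact hac v (transGen_swap.1 h)
    intro v hv
    by_cases hve : v = e
    · exact Or.inl hve
    right
    by_cases h1 : ∃ t, G.St t = v
    · obtain ⟨t, ht⟩ := h1
      exact ⟨G.En t, G.enMem t, Or.inr ⟨t, ht, rfl⟩⟩
    by_cases h2 : ∃ a, (v, a) ∈ G.unl
    · obtain ⟨a, ha⟩ := h2
      exact ⟨a, (G.unlMem _ ha).2, Or.inl ha⟩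
    push Not at h1 h2
    have := (he v).2 ⟨hv, hve, h1, fun a ha => absurd ha (h2 a)⟩
    exact absurd this (h2 e)
  refine ⟨hac, s, e, hstart, fun v hv => reflTransGen_swap.1 (hend v hv), ?_⟩
  intro x y hxy
  constructor
  · by_cases h1 : x = s
    · exact Or.inl h1
    by_cases h2 : y = e
    · subst h2
      obtain ⟨ha, hb, hc, -⟩ := (he x).1 hxy
      rw [hverts] at ha
      simp only [Finset.mem_insert, Finset.mem_union, Finset.mem_image, Finset.mem_univ,
        true_and] at ha
      rcases ha with ha | ha | ⟨t, ht⟩ | ha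
      · exact absurd ha h1
      · exact absurd ha hb
      · exact absurd ht (hc t)
      · exact Or.inr ha
    · exact Or.inr (hun x y hxy h1 h2).1
  · by_cases h2 : y = e
    · exact Or.inl h2
    by_cases h1 : x = s
    · subst h1
      obtain ⟨ha, hb, hc, -⟩ := (hs y).1 hxy
      rw [hverts] at ha
      simp only [Finset.mem_insert, Finset.mem_union, Finset.mem_image, Finset.mem_univ,
        true_and] at ha
      rcases ha with ha | ha | ha | ⟨t, ht⟩
      · exact absurd ha hb
      · exact absurd ha h2
      · exact Or.inr ha
      · exact absurd ht (hc t)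
    · exact Or.inr (hun x y hxy h1 h2).2

open Relation in
/-- The core argument: in an irreducible graph, two starts with the same preceding tasks
coincide. It is stated for raw data, so that it applies to the reversed graph as well. -/
theorem core {V T : Type} (verts : Finset V) (St En : T → V) (unl R : V → V → Prop)
    (hR : ∀ a b, R a b ↔ unl a b ∨ ∃ t, St t = a ∧ En t = b)
    (hac : ∀ v, ¬ TransGen R v v)
    (hmem : ∀ a b, unl a b → a ∈ verts ∧ b ∈ verts)
    (hSt : ∀ t, St t ∈ verts)
    (s : V) (hs : ∀ v ∈ verts, ReflTransGen R s v)
    (hunl : ∀ x y, unl x y → x = s ∨ ∃ t, En t = x)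
    (h1 : ∀ u ∈ verts, ∀ v ∈ verts, (∀ t, En t ≠ u) → (∀ t, En t ≠ v) →
      (∀ w, unl w u ↔ unl w v) → u = v)
    (h2 : ∀ u v w, unl u v → TransGen R u w → TransGen R w v → False)
    (h3 : ∀ u v, unl u v → (∀ t, En t ≠ v) → (∀ w, unl w v → w = u) → False)
    (T1 T2 : T)
    (hP : ∀ t, ReflTransGen R (En t) (St T1) ↔ ReflTransGen R (En t) (St T2)) :
    St T1 = St T2 := by
  by_contra hne
  -- `s` has no incoming edge
  have hs0 : ∀ x, x ∈ verts → ¬ R x s := fun x hx h => hac s (TransGen.tail' (hs x hx) h)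
  -- an in-neighbour of one start reaches the other
  have hnb : ∀ x (A B : T), (∀ t, ReflTransGen R (En t) (St A) → ReflTransGen R (En t) (St B)) →
      unl x (St A) → ReflTransGen R x (St B) := by
    intro x A B hAB hx
    rcases hunl _ _ hx with rfl | ⟨t, rfl⟩
    · exact hs _ (hSt B)
    · exact hAB t (.single ((hR _ _).2 (Or.inl hx)))
  -- a start reached by another start with the same predecessors
  have hcase : ∀ A B : T, St A ≠ St B →
      (∀ t, ReflTransGen R (En t) (St A) ↔ ReflTransGen R (En t) (St B)) →
      (∀ t, En t ≠ St B) → ¬ ReflTransGen R (St A) (St B) := by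
    intro A B hAB hp hB hpath
    rcases ReflTransGen.cases_tail hpath with h | ⟨w, hw, hwB⟩
    · exact hAB h.symm
    rcases (hR _ _).1 hwB with hwu | ⟨t, -, ht⟩
    swap
    · exact hB t ht
    refine h3 w (St B) hwu hB ?_
    intro w' hw'
    by_contra hww
    have : ReflTransGen R w' w := by
      rcases hunl _ _ hw' with rfl | ⟨t, rfl⟩
      · exact hs _ (hmem _ _ hwu).1
      · exact ((hp t).2 (.single ((hR _ _).2 (Or.inl hw')))).trans hw
    rcases reflTransGen_iff_eq_or_transGen.1 this with h | h
    · exact hww h.symm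
    · exact h2 w' (St B) w hw' h (.single hwB)
  -- neither start is the end of a task
  have hno : ∀ A B : T, St A ≠ St B →
      (∀ t, ReflTransGen R (En t) (St A) ↔ ReflTransGen R (En t) (St B)) →
      ∀ t, En t ≠ St A := by
    intro A B hAB hp t ht
    have hpath : ReflTransGen R (St A) (St B) := ht ▸ (hp t).1 (ht ▸ .refl)
    refine hcase A B hAB hp ?_ hpath
    intro t' ht'
    have hback : ReflTransGen R (St B) (St A) := ht' ▸ (hp t').2 (ht' ▸ .refl)
    rcases reflTransGen_iff_eq_or_transGen.1 hpath with h | h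
    · exact hAB h.symm
    · exact hac _ (h.trans_left hback)
  have hsub : ∀ A B : T, St A ≠ St B →
      (∀ t, ReflTransGen R (En t) (St A) ↔ ReflTransGen R (En t) (St B)) →
      ∀ x, unl x (St A) → unl x (St B) := by
    intro A B hAB hp x hx
    have hnA := hno A B hAB hp
    have hnB := hno B A (Ne.symm hAB) (fun t => (hp t).symm)
    rcases ReflTransGen.cases_tail (hnb x A B (fun t => (hp t).1) hx) with h | ⟨y, hxy, hyB⟩
    · exfalso
      refine hcase B A (Ne.symm hAB) (fun t => (hp t).symm) hnA ?_
      rw [h]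
      exact .single ((hR _ _).2 (Or.inl hx))
    rcases (hR _ _).1 hyB with hyu | ⟨t, -, ht⟩
    swap
    · exact absurd ht (hnB t)
    rcases reflTransGen_iff_eq_or_transGen.1 hxy with h | h
    · exact h ▸ hyu
    exfalso
    have hyA := hnb y B A (fun t => (hp t).2) hyu
    rcases reflTransGen_iff_eq_or_transGen.1 hyA with h' | h'
    · refine hcase A B hAB hp hnB ?_
      rw [h']
      exact .single hyB
    · exact h2 x _ y hx h h'
  refine hne (h1 _ (hSt T1) _ (hSt T2) (hno T1 T2 hne hP)
    (hno T2 T1 (Ne.symm hne) (fun t => (hP t).symm)) ?_)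
  exact fun w => ⟨hsub T1 T2 hne hP w, hsub T2 T1 (Ne.symm hne) (fun t => (hP t).symm) w⟩

open Relation in
theorem rel_trans {V T : Type} (G : AOE V T) (hG : G.Acyclic) (a b c : T)
    (h1 : a ≠ b ∧ G.reach a b) (h2 : b ≠ c ∧ G.reach b c) : a ≠ c ∧ G.reach a c := by
  have hb : G.adj (G.St b) (G.En b) := Or.inr ⟨b, rfl, rfl⟩
  have hac : TransGen G.adj (G.En a) (G.St c) :=
    TransGen.trans_left (TransGen.tail' h1.2 hb) h2.2
  refine ⟨?_, hac.to_reflTransGen⟩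
  rintro rfl
  exact hG _ (hac.tail (Or.inr ⟨a, rfl, rfl⟩))

theorem chain_pairwise {V T : Type} (G : AOE V T) (hG : G.Acyclic) (l : List T)
    (h : G.chain l) : l.Pairwise fun t t' => t ≠ t' ∧ G.reach t t' := by
  haveI : IsTrans T (fun t t' => t ≠ t' ∧ G.reach t t') := ⟨rel_trans G hG⟩
  exact List.isChain_iff_pairwise.1 h

theorem equiv_reach {V W T : Type} [Fintype T] (G : AOE V T) (H : AOE W T) (hG : G.Acyclic)
    (hH : H.Acyclic) (hE : AOE.Equiv G H) (t t' : T) (hne : t ≠ t') (h : G.reach t t') :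
    H.reach t t' := by
  classical
  have hlen : ∀ l, G.chain l → l.length ≤ Fintype.card T := by
    intro l hl
    exact List.Nodup.length_le_card ((chain_pairwise G hG l hl).imp fun h => h.1)
  let P : ℕ → Prop := fun n => ∃ l, G.chain l ∧ [t, t'].Sublist l ∧ l.length = n
  have hP2 : P 2 := by
    refine ⟨[t, t'], ?_, List.Sublist.refl _, rfl⟩
    exact List.isChain_pair.2 ⟨hne, h⟩
  have h2 : 2 ≤ Fintype.card T := by
    obtain ⟨l, h1, -, h3⟩ := hP2
    exact h3 ▸ hlen l h1
  obtain ⟨l, hl1, hl2, hl3⟩ : P (Nat.findGreatest P (Fintype.card T)) :=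
    Nat.findGreatest_spec h2 hP2
  have hcrit : G.critPath l := by
    refine ⟨hl1, fun l' hl' hsub => ?_⟩
    have : l'.length ≤ l.length := by
      rw [hl3]
      exact Nat.le_findGreatest (hlen l' hl') ⟨l', hl', hl2.trans hsub, rfl⟩
    exact (hsub.eq_of_length_le this).symm
  have := (chain_pairwise H hH l ((hE l).1 hcrit).1).sublist hl2
  exact (List.pairwise_pair.1 this).2

open Relation in
/-- The other path in Rule 2, through a vertex `w`, avoids the edge `(u, v)`. -/
theorem rule2_of_via {V T : Type} [DecidableEq V] (A : AOE V T) (hac : A.Acyclic) (u v w : V)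
    (h : (u, v) ∈ A.unl) (h1 : TransGen A.adj u w) (h2 : TransGen A.adj w v) :
    Rule2Cond A u v := by
  refine ⟨h, ?_⟩
  have e1 : ∀ x, TransGen A.adj u x → ReflTransGen A.adj x w →
      TransGen (A.delUnl u v).adj u x := by
    intro x hx
    induction hx with
    | single hb =>
      intro hxw
      rcases adj_delUnl A u v _ _ hb with hb | ⟨-, rfl⟩
      · exact .single hb
      · exact absurd (h2.trans_left hxw) (hac w)
    | tail hb hbc ih =>
      intro hxw
      rcases adj_delUnl A u v _ _ hbc with hbc' | ⟨rfl, -⟩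
      · exact (ih (.head hbc hxw)).tail hbc'
      · exact absurd hb (hac _)
  have e2 : ∀ x, TransGen A.adj w x → TransGen (A.delUnl u v).adj w x := by
    intro x hx
    induction hx with
    | single hb =>
      rcases adj_delUnl A u v _ _ hb with hb | ⟨rfl, -⟩
      · exact .single hb
      · exact absurd h1 (hac _)
    | tail hb hbc ih =>
      rcases adj_delUnl A u v _ _ hbc with hbc' | ⟨rfl, -⟩
      · exact ih.tail hbc'
      · exact absurd (h1.trans hb) (hac _)
  exact (e1 w h1 .refl).trans (e2 v h2)

open Relation in
theorem start_eq {V T : Type} [DecidableEq V] (A : AOE V T) (hI : Inv A)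
    (hirr : ∀ B : AOE V T, ¬ Step A B) (T1 T2 : T)
    (hP : ∀ t, A.reach t T1 ↔ A.reach t T2) : A.St T1 = A.St T2 := by
  obtain ⟨hac, s, e, hs, he, hu⟩ := hI
  refine core A.verts A.St A.En (fun a b => (a, b) ∈ A.unl) A.adj (fun _ _ => Iff.rfl) hac
    (fun a b h => A.unlMem _ h) A.stMem s hs (fun x y h => (hu x y h).1) ?_ ?_ ?_ T1 T2 hP
  · intro u hu v hv h1 h2 h3
    by_contra hne
    refine hirr _ (Step.rule1in u v ⟨hu, hv, hne, h1, h2, fun w => ?_⟩)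
    simp only [AOE.adj, h1, h2, and_false, exists_false, or_false]
    exact h3 w
  · intro u v w h h1 h2
    exact hirr _ (Step.rule2 u v (rule2_of_via A hac u v w h h1 h2))
  · intro u v h h1 h2
    refine hirr _ (Step.rule3 u v ⟨h, ?_, fun _ => ⟨h1, h2⟩, ?_, ?_⟩)
    · exact fun hp => hirr _ (Step.rule2 u v ⟨h, hp⟩)
    · rintro ⟨t, ht⟩
      exact absurd ht (h1 t)
    · rintro w z (hw | ⟨t, -, ht⟩) hz
      · rw [h2 w hw]
        exact .single hz
      · exact absurd ht (h1 t)

open Relation in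
theorem end_eq {V T : Type} [DecidableEq V] (A : AOE V T) (hI : Inv A)
    (hirr : ∀ B : AOE V T, ¬ Step A B) (T1 T2 : T)
    (hP : ∀ t, A.reach T1 t ↔ A.reach T2 t) : A.En T1 = A.En T2 := by
  obtain ⟨hac, s, e, hs, he, hu⟩ := hI
  refine core A.verts A.En A.St (fun a b => (b, a) ∈ A.unl) (Function.swap A.adj) ?_
    (fun v h => hac v (transGen_swap.1 h))
    (fun a b h => (A.unlMem _ h).symm) A.enMem e
    (fun v hv => reflTransGen_swap.2 (he v hv)) (fun x y h => (hu y x h).2) ?_ ?_ ?_ T1 T2 ?_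
  · intro a b
    simp only [Function.swap, AOE.adj, and_comm]
  · intro u hu v hv h1 h2 h3
    by_contra hne
    refine hirr _ (Step.rule1out u v ⟨hu, hv, hne, h1, h2, fun w => ?_⟩)
    simp only [AOE.adj, h1, h2, false_and, exists_false, or_false]
    exact h3 w
  · intro v u w h h1 h2
    exact hirr _ (Step.rule2 u v (rule2_of_via A hac u v w h (transGen_swap.1 h2)
      (transGen_swap.1 h1)))
  · intro v u h h1 h2
    refine hirr _ (Step.rule3 u v ⟨h, ?_, ?_, fun _ => ⟨h1, h2⟩, ?_⟩)
    · exact fun hp => hirr _ (Step.rule2 u v ⟨h, hp⟩)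
    · rintro ⟨t, ht⟩
      exact absurd ht (h1 t)
    · rintro w z hw (hz | ⟨t, ht, -⟩)
      · rw [h2 z hz]
        exact .single hw
      · exact absurd ht (h1 t)
  · intro t
    exact reflTransGen_swap.trans ((hP t).trans reflTransGen_swap.symm)

open Relation in
theorem not_reach_self {V T : Type} (G : AOE V T) (hG : G.Acyclic) (t : T) : ¬ G.reach t t :=
  fun h => hG _ (TransGen.tail' h (Or.inr ⟨t, rfl, rfl⟩))

/-- For an output AOE `A` and an optimal AOE `Opt ≡ A`: distinct start
vertices in `A` stay distinct in `Opt`, and distinct end vertices in `A` stay distinct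
in `Opt`. -/
theorem stmt9 {V W T : Type} [DecidableEq V] [Fintype T]
    (G A : AOE V T) (hA : IsOutput G A)
    (Opt : AOE W T) (hAc : Opt.Acyclic) (hOpt : Optimal Opt) (hEq : AOE.Equiv A Opt) :
    ∀ t t' : T, t ≠ t' →
      (A.St t ≠ A.St t' → Opt.St t ≠ Opt.St t') ∧
        (A.En t ≠ A.En t' → Opt.En t ≠ Opt.En t') := by
  have hI : Inv A := by
    obtain ⟨hc, hr, -⟩ := hA
    have h0 := inv_canonical G hc
    clear hEq
    induction hr with
    | refl => exact h0
    | tail _ h ih => exact inv_step _ _ h ih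
  have hreach : ∀ a b, A.reach a b ↔ Opt.reach a b := by
    intro a b
    by_cases hab : a = b
    · subst hab
      exact iff_of_false (not_reach_self A hI.1 a) (not_reach_self Opt hAc a)
    · exact ⟨equiv_reach A Opt hI.1 hAc hEq a b hab,
        equiv_reach Opt A hAc hI.1 (fun l => (hEq l).symm) a b hab⟩
  intro t t' _
  constructor
  · intro h h'
    refine h (start_eq A hI hA.2.2 t t' fun x => ?_)
    rw [hreach, hreach]
    unfold AOE.reach
    rw [h']
  · intro h h'
    refine h (end_eq A hI hA.2.2 t t' fun x => ?_)
    rw [hreach, hreach]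
    unfold AOE.reach
    rw [h']

end AOEPaper
end

section
/- Given a canonical AOE G, the simplification algorithm produces the same output regardless of the order in which the rules are applied: if 𝒜₁ and 𝒜₂ are both obtained from G by (possibly different) sequences of applications of Rules 1, 2, 3 such that no rule applies to either result, then 𝒜₁ and 𝒜₂ are identical as AOE graphs (isomorphic via a bijection that preserves task labels, identifies each task's start and end vertices, and matches the unlabeled edges). -/
namespace AOEPaper

section helpers

open Relation

set_option linter.unusedSectionVars false

variable {V T : Type}

/-- Start labels, with the global end vertex as an additional label. -/
def stl (A : AOE V T) (e : V) : Option T → V := fun o => o.elim e A.St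

/-- End labels, with the global start vertex as an additional label. -/
def enl (A : AOE V T) (s : V) : Option T → V := fun o => o.elim s A.En

/-- The invariant of the simplification process. -/
structure Inv_s13 (A : AOE V T) (s e : V) (R : Option T → Option T → Prop) : Prop where
  acyc : A.Acyclic
  sMem : s ∈ A.verts
  eMem : e ∈ A.verts
  lab : ∀ x ∈ A.verts, (∃ o, stl A e o = x) ∨ ∃ o, enl A s o = x
  unlL : ∀ a b, (a, b) ∈ A.unl → (∃ o, enl A s o = a) ∧ ∃ o, stl A e o = b
  reach : ∀ o o', ReflTransGen A.adj (enl A s o) (stl A e o') ↔ R o o'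
  rs : ∀ o, R none o
  re : ∀ o, R o none

/-- Reversal of all edges. -/
def AOE.rev (A : AOE V T) : AOE V T where
  verts := A.verts
  St := A.En
  En := A.St
  stMem := A.enMem
  enMem := A.stMem
  unl := A.unl.map Prod.swap
  unlMem := by
    intro e he
    rw [Multiset.mem_map] at he
    obtain ⟨a, ha, rfl⟩ := he
    exact ⟨(A.unlMem a ha).2, (A.unlMem a ha).1⟩

theorem mem_rev_unl (A : AOE V T) (a b : V) : (a, b) ∈ A.rev.unl ↔ (b, a) ∈ A.unl := by
  simp only [AOE.rev, Multiset.mem_map]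
  constructor
  · rintro ⟨⟨x, y⟩, h, h'⟩
    simp only [Prod.swap, Prod.mk.injEq] at h'
    obtain ⟨rfl, rfl⟩ := h'
    exact h
  · intro h
    exact ⟨(b, a), h, rfl⟩

theorem adj_rev (A : AOE V T) : A.rev.adj = Function.swap A.adj := by
  funext a b
  apply propext
  simp only [AOE.adj, mem_rev_unl, Function.swap]
  constructor
  · rintro (h | ⟨t, h1, h2⟩)
    · exact Or.inl h
    · exact Or.inr ⟨t, h2, h1⟩
  · rintro (h | ⟨t, h1, h2⟩)
    · exact Or.inl h
    · exact Or.inr ⟨t, h2, h1⟩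

theorem rev_rev (A : AOE V T) : A.rev.rev = A := by
  cases A
  simp [AOE.rev, Multiset.map_map]

theorem rev_merge [DecidableEq V] (A : AOE V T) (u v : V) :
    (A.merge u v).rev = A.rev.merge u v := by
  cases A
  simp [AOE.rev, AOE.merge, Multiset.map_map]

theorem rev_del [DecidableEq V] (A : AOE V T) (u v : V) :
    (A.delUnl u v).rev = A.rev.delUnl v u := by
  cases A
  simp only [AOE.rev, AOE.delUnl, AOE.mk.injEq, true_and]
  rw [Multiset.map_erase _ Prod.swap_injective]
  rfl

theorem Inv_s13.rev {A : AOE V T} {s e : V} {R : Option T → Option T → Prop} (h : Inv_s13 A s e R) :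
    Inv_s13 A.rev e s (fun a b => R b a) where
  acyc := by
    intro v hv
    rw [adj_rev, transGen_swap] at hv
    exact h.acyc v hv
  sMem := h.eMem
  eMem := h.sMem
  lab := fun x hx => (h.lab x hx).symm
  unlL := fun a b hab => (h.unlL b a ((mem_rev_unl A a b).1 hab)).symm
  reach := by
    intro o o'
    rw [adj_rev, reflTransGen_swap]
    exact h.reach o' o
  rs := h.re
  re := h.rs

variable [DecidableEq V]

/-- No rule applies. -/
def NF (A : AOE V T) : Prop := ∀ B : AOE V T, ¬ Step A B

theorem adj_del_of {A : AOE V T} {u v a b : V} (h : (A.delUnl u v).adj a b) : A.adj a b := by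
  rcases h with h | h
  · exact Or.inl (Multiset.mem_of_mem_erase h)
  · exact Or.inr h

theorem adj_del_or {A : AOE V T} {u v a b : V} (h : A.adj a b) :
    (A.delUnl u v).adj a b ∨ (a = u ∧ b = v) := by
  by_cases hab : a = u ∧ b = v
  · exact Or.inr hab
  · left
    rcases h with h | h
    · left
      have : (a, b) ≠ (u, v) := by simpa using hab
      exact (Multiset.mem_erase_of_ne this).2 h
    · exact Or.inr h

theorem rule1in_rev {A : AOE V T} {u v : V} : Rule1InCond A.rev u v ↔ Rule1OutCond A u v := by
  unfold Rule1InCond Rule1OutCond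
  rw [adj_rev]
  rfl

theorem rule2_rev {A : AOE V T} {u v : V} (h : Rule2Cond A u v) : Rule2Cond A.rev v u := by
  refine ⟨(mem_rev_unl A v u).2 h.1, ?_⟩
  rw [← rev_del, adj_rev, transGen_swap]
  exact h.2

theorem rule3_rev {A : AOE V T} {u v : V} (h : Rule3Cond A u v) : Rule3Cond A.rev v u := by
  obtain ⟨h1, h2, h3, h4, h5⟩ := h
  refine ⟨(mem_rev_unl A v u).2 h1, ?_, ?_, ?_, ?_⟩
  · rw [← rev_del, adj_rev, transGen_swap]
    exact h2
  · intro ht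
    exact ⟨(h4 ht).1, fun w hw => (h4 ht).2 w ((mem_rev_unl _ _ _).1 hw)⟩
  · intro ht
    exact ⟨(h3 ht).1, fun w hw => (h3 ht).2 w ((mem_rev_unl _ _ _).1 hw)⟩
  · intro w z hw hz
    rw [adj_rev] at hw hz ⊢
    rw [reflTransGen_swap]
    exact h5 z w hz hw

theorem nf_r1o {A : AOE V T} (h : NF A) (u v : V) : ¬ Rule1OutCond A u v :=
  fun hc => h _ (Step.rule1out u v hc)
theorem nf_r1i {A : AOE V T} (h : NF A) (u v : V) : ¬ Rule1InCond A u v :=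
  fun hc => h _ (Step.rule1in u v hc)
theorem nf_r2 {A : AOE V T} (h : NF A) (u v : V) : ¬ Rule2Cond A u v :=
  fun hc => h _ (Step.rule2 u v hc)
theorem nf_r3 {A : AOE V T} (h : NF A) (u v : V) : ¬ Rule3Cond A u v :=
  fun hc => h _ (Step.rule3 u v hc)

theorem NF.rev {A : AOE V T} (h : NF A) : NF A.rev := by
  intro B hB
  cases hB with
  | rule1out u v hc =>
    refine nf_r1i h u v ?_
    have := (rule1in_rev (A := A.rev)).2 hc
    rwa [rev_rev] at this
  | rule1in u v hc => exact nf_r1o h u v (rule1in_rev.1 hc)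
  | rule2 u v hc =>
    refine nf_r2 h v u ?_
    have := rule2_rev hc
    rwa [rev_rev] at this
  | rule3 u v hc =>
    refine nf_r3 h v u ?_
    have := rule3_rev hc
    rwa [rev_rev] at this

/-- A path either avoids the deleted edge or passes through its endpoints. -/
theorem path_del {A : AOE V T} {x y a b : V} (h : TransGen A.adj a b) :
    TransGen (A.delUnl x y).adj a b ∨ (ReflTransGen A.adj a x ∧ ReflTransGen A.adj y b) := by
  induction h with
  | single h =>
    rcases adj_del_or (u := x) (v := y) h with h | ⟨rfl, rfl⟩
    · exact Or.inl (.single h)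
    · exact Or.inr ⟨.refl, .refl⟩
  | tail h1 h2 ih =>
    rcases ih with ih | ⟨i1, i2⟩
    · rcases adj_del_or (u := x) (v := y) h2 with h | ⟨rfl, rfl⟩
      · exact Or.inl (.tail ih h)
      · exact Or.inr ⟨h1.to_reflTransGen, .refl⟩
    · exact Or.inr ⟨i1, i2.tail h2⟩

theorem two_path_del {A : AOE V T} (hA : A.Acyclic) {x y z : V} (h1 : TransGen A.adj x z)
    (h2 : TransGen A.adj z y) : TransGen (A.delUnl x y).adj x y := by
  refine TransGen.trans (b := z) ?_ ?_
  · rcases path_del (x := x) (y := y) h1 with h | ⟨_, h⟩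
    · exact h
    · exact (hA z (h2.trans_left h)).elim
  · rcases path_del (x := x) (y := y) h2 with h | ⟨h, _⟩
    · exact h
    · exact (hA x (h1.trans_left h)).elim

theorem trans_of_ne {r : V → V → Prop} {a b : V} (h : ReflTransGen r a b) (hn : a ≠ b) :
    TransGen r a b := by
  rcases reflTransGen_iff_eq_or_transGen.1 h with h | h
  · exact (hn h.symm).elim
  · exact h

theorem antisymm_of {A : AOE V T} (hA : A.Acyclic) {a b : V} (h1 : ReflTransGen A.adj a b)
    (h2 : ReflTransGen A.adj b a) : a = b := by
  by_contra hn
  exact hA a ((trans_of_ne h1 hn).trans_left h2)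

/-- No shortcut edges in normal form. -/
theorem ns {A : AOE V T} (hA : A.Acyclic) (hn : NF A) {x y z : V} (h : (x, y) ∈ A.unl)
    (h1 : TransGen A.adj x z) (h2 : TransGen A.adj z y) : False :=
  nf_r2 hn x y ⟨h, two_path_del hA h1 h2⟩

theorem adj_unl_of {A : AOE V T} {s : V} {w y : V} (hy : ∀ o, enl A s o ≠ y)
    (h : A.adj w y) : (w, y) ∈ A.unl := by
  rcases h with h | ⟨t, _, h⟩
  · exact h
  · exact (hy (some t) h).elim

section nf
variable {A : AOE V T} {s e : V} {R : Option T → Option T → Prop}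

theorem stl_mem (hI : Inv_s13 A s e R) (o : Option T) : stl A e o ∈ A.verts := by
  cases o with
  | none => exact hI.eMem
  | some t => exact A.stMem t

theorem enl_mem (hI : Inv_s13 A s e R) (o : Option T) : enl A s o ∈ A.verts := by
  cases o with
  | none => exact hI.sMem
  | some t => exact A.enMem t

theorem nf_mixed (hI : Inv_s13 A s e R) (hn : NF A) {a a' c : Option T}
    (h : ∀ b, R b a ↔ R b a') (hc : enl A s c = stl A e a)
    (hne : stl A e a ≠ stl A e a') (hy : ∀ o, enl A s o ≠ stl A e a') : False := by
  have hin : ∀ w, A.adj w (stl A e a') → w = stl A e a := by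
    intro w hw
    by_contra hwx
    have hu := adj_unl_of hy hw
    obtain ⟨⟨b, rfl⟩, _⟩ := hI.unlL _ _ hu
    have h1 := (hI.reach b a').1 (.single hw)
    have h2 := (hI.reach b a).2 ((h b).2 h1)
    have h3 : R c a' := (h c).1 ((hI.reach c a).1 (by rw [hc]))
    have h4 := (hI.reach c a').2 h3
    rw [hc] at h4
    exact ns hI.acyc hn hu (trans_of_ne h2 hwx) (trans_of_ne h4 hne)
  have h3 : R c a' := (h c).1 ((hI.reach c a).1 (by rw [hc]))
  have h4 := (hI.reach c a').2 h3
  rw [hc] at h4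
  obtain ⟨w, _, hw⟩ := TransGen.tail'_iff.1 (trans_of_ne h4 hne)
  obtain rfl := hin w hw
  have hu := adj_unl_of hy hw
  refine nf_r3 hn _ _ ⟨hu, fun hp => nf_r2 hn _ _ ⟨hu, hp⟩, ?_, ?_, ?_⟩
  · intro _
    exact ⟨fun t => hy (some t), fun w hw => hin w (Or.inl hw)⟩
  · rintro ⟨t, ht⟩
    exact (hy (some t) ht).elim
  · intro w z hw hz
    rw [hin w hw]
    exact .single hz

theorem nf_innbr (hI : Inv_s13 A s e R) (hn : NF A) {a a' : Option T}
    (h : ∀ b, R b a ↔ R b a') (hx : ∀ o, enl A s o ≠ stl A e a)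
    (hy : ∀ o, enl A s o ≠ stl A e a') (w : V) (hw : A.adj w (stl A e a)) :
    A.adj w (stl A e a') := by
  have hu := adj_unl_of hx hw
  obtain ⟨⟨b, rfl⟩, _⟩ := hI.unlL _ _ hu
  have h1 := (hI.reach b a').2 ((h b).1 ((hI.reach b a).1 (.single hw)))
  obtain ⟨w', h2, h3⟩ := TransGen.tail'_iff.1 (trans_of_ne h1 (hy b))
  have hu' := adj_unl_of hy h3
  obtain ⟨⟨b', rfl⟩, _⟩ := hI.unlL _ _ hu'
  have h4 := (hI.reach b' a).2 ((h b').2 ((hI.reach b' a').1 (.single h3)))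
  by_cases hww : enl A s b = enl A s b'
  · rw [hww]; exact h3
  · exact (ns hI.acyc hn hu (trans_of_ne h2 hww) (trans_of_ne h4 (hx b'))).elim

theorem nf_st (hI : Inv_s13 A s e R) (hn : NF A) {a a' : Option T} (h : ∀ b, R b a ↔ R b a') :
    stl A e a = stl A e a' := by
  by_contra hne
  by_cases hx : ∃ c, enl A s c = stl A e a
  · obtain ⟨c, hc⟩ := hx
    by_cases hy : ∃ c, enl A s c = stl A e a'
    · obtain ⟨c', hc'⟩ := hy
      have h1 := (hI.reach c a').2 ((h c).1 ((hI.reach c a).1 (by rw [hc])))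
      have h2 := (hI.reach c' a).2 ((h c').2 ((hI.reach c' a').1 (by rw [hc'])))
      rw [hc] at h1
      rw [hc'] at h2
      exact hne (antisymm_of hI.acyc h1 h2)
    · push Not at hy
      exact nf_mixed hI hn h hc hne hy
  · by_cases hy : ∃ c, enl A s c = stl A e a'
    · obtain ⟨c', hc'⟩ := hy
      push Not at hx
      exact nf_mixed hI hn (fun b => (h b).symm) hc' (Ne.symm hne) hx
    · push Not at hx hy
      refine nf_r1i hn (stl A e a) (stl A e a') ⟨stl_mem hI a, stl_mem hI a', hne,
        fun t => hx (some t), fun t => hy (some t), fun w => ⟨?_, ?_⟩⟩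
      · exact nf_innbr hI hn h hx hy w
      · exact nf_innbr hI hn (fun b => (h b).symm) hy hx w

theorem nf_en (hI : Inv_s13 A s e R) (hn : NF A) {a a' : Option T} (h : ∀ b, R a b ↔ R a' b) :
    enl A s a = enl A s a' :=
  nf_st (A := A.rev) hI.rev hn.rev h

theorem nf_st_iff (hI : Inv_s13 A s e R) (hn : NF A) {a a' : Option T} :
    stl A e a = stl A e a' ↔ ∀ b, R b a ↔ R b a' := by
  refine ⟨fun h b => ?_, nf_st hI hn⟩
  rw [← hI.reach, ← hI.reach, h]

theorem nf_en_iff (hI : Inv_s13 A s e R) (hn : NF A) {a a' : Option T} :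
    enl A s a = enl A s a' ↔ ∀ b, R a b ↔ R a' b := by
  refine ⟨fun h b => ?_, nf_en hI hn⟩
  rw [← hI.reach, ← hI.reach, h]

theorem nf_ste_iff (hI : Inv_s13 A s e R) (hn : NF A) {a b : Option T} :
    stl A e a = enl A s b ↔ R b a ∧ ∀ b' a', R b' a → R b a' → R b' a' := by
  constructor
  · intro h
    refine ⟨(hI.reach b a).1 (by rw [h]), fun b' a' h1 h2 => ?_⟩
    have h1 := (hI.reach _ _).2 h1
    have h2 := (hI.reach _ _).2 h2
    rw [h] at h1
    exact (hI.reach _ _).1 (h1.trans h2)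
  · rintro ⟨hba, hall⟩
    by_contra hne
    have hp := (hI.reach b a).2 hba
    by_cases hx : ∃ c, enl A s c = stl A e a
    · obtain ⟨c, hc⟩ := hx
      have hca : R c a := (hI.reach c a).1 (by rw [hc])
      apply hne
      rw [← hc]
      refine nf_en hI hn fun d => ⟨fun h => ?_, fun h => hall c d hca h⟩
      have h := (hI.reach _ _).2 h
      rw [hc] at h
      exact (hI.reach _ _).1 (hp.trans h)
    by_cases hy : ∃ c, stl A e c = enl A s b
    · obtain ⟨c, hc⟩ := hy
      have hbc : R b c := (hI.reach b c).1 (by rw [hc])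
      apply hne
      rw [← hc]
      refine nf_st hI hn fun d => ⟨fun h => hall d c h hbc, fun h => ?_⟩
      have h := (hI.reach _ _).2 h
      rw [hc] at h
      exact (hI.reach _ _).1 (h.trans hp)
    push Not at hx hy
    have hpp := trans_of_ne hp (Ne.symm hne)
    obtain ⟨z, hz1, hz2⟩ := TransGen.head'_iff.1 hpp
    have hout : ∀ z, A.adj (enl A s b) z → (enl A s b, z) ∈ A.unl := by
      rintro z (h | ⟨t, h, _⟩)
      · exact h
      · exact (hy (some t) h).elim
    have hu := hout z hz1
    obtain ⟨_, ⟨c, hc⟩⟩ := hI.unlL _ _ hu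
    have hzx : z = stl A e a := by
      rw [← hc]
      refine nf_st hI hn fun d => ⟨fun h => ?_, fun h => ?_⟩
      · have h := (hI.reach _ _).2 h
        rw [hc] at h
        exact (hI.reach _ _).1 (h.trans hz2)
      · refine hall d c h ((hI.reach _ _).1 ?_)
        rw [hc]
        exact .single hz1
    subst hzx
    refine nf_r3 hn _ _ ⟨hu, fun hp => nf_r2 hn _ _ ⟨hu, hp⟩, ?_, ?_, ?_⟩
    · rintro ⟨t, ht⟩
      exact (hy (some t) ht).elim
    · rintro ⟨t, ht⟩
      exact (hx (some t) ht).elim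
    · intro w z hw hz
      obtain ⟨⟨b', rfl⟩, _⟩ := hI.unlL _ _ (adj_unl_of hx hw)
      obtain ⟨_, ⟨a', rfl⟩⟩ := hI.unlL _ _ (hout z hz)
      exact (hI.reach _ _).2 (hall _ _ ((hI.reach _ _).1 (.single hw))
        ((hI.reach _ _).1 (.single hz)))

theorem nf_nodup (hn : NF A) : A.unl.Nodup := by
  rw [Multiset.nodup_iff_count_le_one]
  rintro ⟨x, y⟩
  by_contra hc
  refine nf_r2 hn x y ⟨Multiset.count_pos.1 (by omega), .single (Or.inl ?_)⟩
  change (x, y) ∈ A.unl.erase (x, y)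
  rw [← Multiset.count_pos, Multiset.count_erase_self]
  omega

end nf

/-- Joint labelling. -/
def lbl (A : AOE V T) (s e : V) : Option T ⊕ Option T → V := Sum.elim (stl A e) (enl A s)

section two
variable {A B : AOE V T} {s e s' e' : V} {R : Option T → Option T → Prop}

theorem lbl_eq_iff (hA : Inv_s13 A s e R) (hB : Inv_s13 B s' e' R) (nA : NF A) (nB : NF B)
    (l l' : Option T ⊕ Option T) : lbl A s e l = lbl A s e l' ↔ lbl B s' e' l = lbl B s' e' l' := by
  rcases l with a | b <;> rcases l' with a' | b' <;> simp only [lbl, Sum.elim_inl, Sum.elim_inr]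
  · rw [nf_st_iff hA nA, nf_st_iff hB nB]
  · rw [nf_ste_iff hA nA, nf_ste_iff hB nB]
  · rw [eq_comm, nf_ste_iff hA nA, eq_comm, nf_ste_iff hB nB]
  · rw [nf_en_iff hA nA, nf_en_iff hB nB]

theorem edge_transfer (hA : Inv_s13 A s e R) (hB : Inv_s13 B s' e' R) (nA : NF A) (nB : NF B)
    {b a : Option T} (h : (enl A s b, stl A e a) ∈ A.unl) :
    (enl B s' b, stl B e' a) ∈ B.unl := by
  have hR : R b a := (hA.reach b a).1 (.single (Or.inl h))
  have hAne : enl A s b ≠ stl A e a := by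
    intro heq
    apply hA.acyc (enl A s b)
    refine .single ?_
    nth_rewrite 2 [heq]
    exact Or.inl h
  have hBne : enl B s' b ≠ stl B e' a := by
    intro heq
    exact hAne ((lbl_eq_iff hA hB nA nB (.inr b) (.inl a)).2 heq)
  have htask : ∀ t, R b (some t) → R (some t) a → False := by
    intro t h1 h2
    have h1 := (hA.reach _ _).2 h1
    have h2 := (hA.reach _ _).2 h2
    have ht : A.adj (stl A e (some t)) (enl A s (some t)) := Or.inr ⟨t, rfl, rfl⟩
    by_cases hx : enl A s b = stl A e (some t)
    · by_cases hy : enl A s (some t) = stl A e a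
      · refine nf_r2 nA _ _ ⟨h, .single (Or.inr ⟨t, hx.symm, hy⟩)⟩
      · refine ns hA.acyc nA h (z := enl A s (some t)) ?_ (trans_of_ne h2 hy)
        rw [hx]
        exact .single ht
    · exact ns hA.acyc nA h (trans_of_ne h1 hx) (.head' ht h2)
  obtain ⟨z, hz1, hz2⟩ := TransGen.head'_iff.1 (trans_of_ne ((hB.reach b a).2 hR) hBne)
  rcases hz1 with hz1 | ⟨t, ht1, ht2⟩
  · obtain ⟨_, ⟨c, rfl⟩⟩ := hB.unlL _ _ hz1
    by_cases hza : stl B e' c = stl B e' a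
    · rw [← hza]; exact hz1
    exfalso
    have hbc : R b c := (hB.reach _ _).1 (.single (Or.inl hz1))
    obtain ⟨z', hz3, hz4⟩ := TransGen.head'_iff.1 (trans_of_ne hz2 hza)
    rcases hz3 with hz3 | ⟨t, ht1, ht2⟩
    · obtain ⟨⟨d, hd⟩, _⟩ := hB.unlL _ _ hz3
      have hda : R d a := by
        apply (hB.reach _ _).1
        rw [hd]
        exact hz2
      have hcd : stl A e c = enl A s d := (lbl_eq_iff hA hB nA nB (.inl c) (.inr d)).2 hd.symm
      have hca : stl A e c ≠ stl A e a := fun h =>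
        hza ((lbl_eq_iff hA hB nA nB (.inl c) (.inl a)).1 h)
      have hbcA : enl A s b ≠ stl A e c := by
        intro h
        have h' : enl B s' b = stl B e' c := (lbl_eq_iff hA hB nA nB (.inr b) (.inl c)).1 h
        apply hB.acyc (enl B s' b)
        refine .single ?_
        nth_rewrite 2 [h']
        exact Or.inl hz1
      refine ns hA.acyc nA h (trans_of_ne ((hA.reach _ _).2 hbc) hbcA) ?_
      refine trans_of_ne ?_ hca
      rw [hcd]
      exact (hA.reach _ _).2 hda
    · apply htask t
      · apply (hB.reach _ _).1
        change ReflTransGen _ _ (B.St t)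
        rw [ht1]
        exact .single (Or.inl hz1)
      · apply (hB.reach _ _).1
        change ReflTransGen _ (B.En t) _
        rw [ht2]
        exact hz4
  · exfalso
    apply htask t
    · apply (hB.reach _ _).1
      change ReflTransGen _ _ (B.St t)
      rw [ht1]
    · apply (hB.reach _ _).1
      change ReflTransGen _ (B.En t) _
      rw [ht2]
      exact hz2

theorem iso_of_nf (hA : Inv_s13 A s e R) (hB : Inv_s13 B s' e' R) (nA : NF A) (nB : NF B) :
    ∃ φ : V → V, Set.BijOn φ ↑A.verts ↑B.verts ∧
      (∀ t, φ (A.St t) = B.St t) ∧ (∀ t, φ (A.En t) = B.En t) ∧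
      B.unl = A.unl.map fun e : V × V => (φ e.1, φ e.2) := by
  classical
  let φ : V → V := fun x => if h : ∃ l, lbl A s e l = x then lbl B s' e' h.choose else x
  have hφ : ∀ l, φ (lbl A s e l) = lbl B s' e' l := by
    intro l
    have h : ∃ l', lbl A s e l' = lbl A s e l := ⟨l, rfl⟩
    simp only [φ, dif_pos h]
    exact (lbl_eq_iff hA hB nA nB _ _).1 h.choose_spec
  have hlA : ∀ x ∈ A.verts, ∃ l, lbl A s e l = x := by
    intro x hx
    rcases hA.lab x hx with ⟨o, h⟩ | ⟨o, h⟩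
    · exact ⟨.inl o, h⟩
    · exact ⟨.inr o, h⟩
  have hlB : ∀ x ∈ B.verts, ∃ l, lbl B s' e' l = x := by
    intro x hx
    rcases hB.lab x hx with ⟨o, h⟩ | ⟨o, h⟩
    · exact ⟨.inl o, h⟩
    · exact ⟨.inr o, h⟩
  have hmA : ∀ l, lbl A s e l ∈ A.verts := by
    rintro (o | o)
    · exact stl_mem hA o
    · exact enl_mem hA o
  have hmB : ∀ l, lbl B s' e' l ∈ B.verts := by
    rintro (o | o)
    · exact stl_mem hB o
    · exact enl_mem hB o
  have hinj : Set.InjOn φ ↑A.verts := by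
    intro x hx y hy hxy
    obtain ⟨l, rfl⟩ := hlA x hx
    obtain ⟨l', rfl⟩ := hlA y hy
    rw [hφ, hφ] at hxy
    exact (lbl_eq_iff hA hB nA nB _ _).2 hxy
  refine ⟨φ, ⟨?_, hinj, ?_⟩, fun t => hφ (.inl (some t)), fun t => hφ (.inr (some t)), ?_⟩
  · intro x hx
    obtain ⟨l, rfl⟩ := hlA x hx
    rw [hφ]
    exact hmB l
  · intro x hx
    obtain ⟨l, rfl⟩ := hlB x hx
    exact ⟨_, hmA l, hφ l⟩
  · refine (Multiset.Nodup.ext (nf_nodup nB) ?_).2 ?_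
    · refine Multiset.Nodup.map_on ?_ (nf_nodup nA)
      rintro ⟨x, y⟩ hx ⟨x', y'⟩ hx' heq
      simp only [Prod.mk.injEq] at heq ⊢
      exact ⟨hinj (A.unlMem _ hx).1 (A.unlMem _ hx').1 heq.1,
        hinj (A.unlMem _ hx).2 (A.unlMem _ hx').2 heq.2⟩
    · rintro ⟨x, y⟩
      rw [Multiset.mem_map]
      constructor
      · intro h
        obtain ⟨⟨b, rfl⟩, ⟨a, rfl⟩⟩ := hB.unlL _ _ h
        refine ⟨_, edge_transfer hB hA nB nA h, ?_⟩
        exact Prod.ext (hφ (.inr b)) (hφ (.inl a))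
      · rintro ⟨⟨x', y'⟩, h, heq⟩
        obtain ⟨⟨b, rfl⟩, ⟨a, rfl⟩⟩ := hA.unlL _ _ h
        have h1 : φ (enl A s b) = enl B s' b := hφ (.inr b)
        have h2 : φ (stl A e a) = stl B e' a := hφ (.inl a)
        simp only [h1, h2, Prod.mk.injEq] at heq
        rw [← heq.1, ← heq.2]
        exact edge_transfer hA hB nA nB h

end two

section steps
variable {A : AOE V T} {s e : V} {R : Option T → Option T → Prop}

theorem mergeV_eq {u v a b : V} (h : mergeV u v a = mergeV u v b) :
    a = b ∨ (a = u ∧ b = v) ∨ (a = v ∧ b = u) := by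
  unfold mergeV at h
  split_ifs at h with h1 h2 h2
  · exact Or.inl (h1.trans h2.symm)
  · exact Or.inr (Or.inr ⟨h1, h.symm⟩)
  · exact Or.inr (Or.inl ⟨h, h2⟩)
  · exact Or.inl h

theorem mergeV_self {u v : V} : mergeV u v u = mergeV u v v := by
  unfold mergeV
  split_ifs <;> simp_all

theorem adj_merge (u v c d : V) : (A.merge u v).adj c d ↔
    ∃ p q, A.adj p q ∧ mergeV u v p = c ∧ mergeV u v q = d := by
  constructor
  · rintro (h | ⟨t, h1, h2⟩)
    · simp only [AOE.merge, Multiset.mem_map] at h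
      obtain ⟨⟨p, q⟩, h, heq⟩ := h
      simp only [Prod.mk.injEq] at heq
      exact ⟨p, q, Or.inl h, heq.1, heq.2⟩
    · exact ⟨A.St t, A.En t, Or.inr ⟨t, rfl, rfl⟩, h1, h2⟩
  · rintro ⟨p, q, h | ⟨t, rfl, rfl⟩, rfl, rfl⟩
    · exact Or.inl (Multiset.mem_map.2 ⟨(p, q), h, rfl⟩)
    · exact Or.inr ⟨t, rfl, rfl⟩

theorem inv_merge_s13 (hI : Inv_s13 A s e R) (D : AOE V T) (hv : D.verts = A.verts) (hSt : D.St = A.St)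
    (hEn : D.En = A.En) (hunl : ∀ x ∈ D.unl, x ∈ A.unl) {u v : V} (hu : u ∈ A.verts)
    (hac : (D.merge u v).Acyclic)
    (fwd : ∀ p q, A.adj p q → D.adj p q ∨ (p = u ∧ q = v))
    (bwd : ∀ o o', ReflTransGen (D.merge u v).adj (mergeV u v (enl A s o))
      (mergeV u v (stl A e o')) → ReflTransGen A.adj (enl A s o) (stl A e o')) :
    Inv_s13 (D.merge u v) (mergeV u v s) (mergeV u v e) R := by
  have hst : ∀ o, stl (D.merge u v) (mergeV u v e) o = mergeV u v (stl A e o) := by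
    rintro (_ | t)
    · rfl
    · change mergeV u v (D.St t) = mergeV u v (A.St t)
      rw [hSt]
  have hen : ∀ o, enl (D.merge u v) (mergeV u v s) o = mergeV u v (enl A s o) := by
    rintro (_ | t)
    · rfl
    · change mergeV u v (D.En t) = mergeV u v (A.En t)
      rw [hEn]
  have hmem : ∀ x ∈ A.verts, mergeV u v x ∈ (D.merge u v).verts := by
    intro x hx
    exact mergeV_mem u v x (hv ▸ hx)
  refine ⟨hac, hmem s hI.sMem, hmem e hI.eMem, ?_, ?_, ?_, hI.rs, hI.re⟩
  · intro x hx
    have hx' : ∃ y ∈ A.verts, mergeV u v y = x := by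
      simp only [AOE.merge, Finset.mem_insert, Finset.mem_erase] at hx
      rcases hx with rfl | ⟨h1, h2⟩
      · refine ⟨x, hu, ?_⟩
        unfold mergeV
        split_ifs <;> rfl
      · exact ⟨x, hv ▸ h2, if_neg h1⟩
    obtain ⟨y, hy, rfl⟩ := hx'
    rcases hI.lab y hy with ⟨o, rfl⟩ | ⟨o, rfl⟩
    · exact Or.inl ⟨o, hst o⟩
    · exact Or.inr ⟨o, hen o⟩
  · intro a b hab
    simp only [AOE.merge, Multiset.mem_map] at hab
    obtain ⟨⟨p, q⟩, h, heq⟩ := hab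
    simp only [Prod.mk.injEq] at heq
    obtain ⟨rfl, rfl⟩ := heq
    obtain ⟨⟨o, ho⟩, ⟨o', ho'⟩⟩ := hI.unlL p q (hunl _ h)
    exact ⟨⟨o, by rw [hen, ho]⟩, ⟨o', by rw [hst, ho']⟩⟩
  · intro o o'
    rw [hst, hen, ← hI.reach]
    refine ⟨bwd o o', fun h => ?_⟩
    generalize enl A s o = x at h
    generalize stl A e o' = y at h
    induction h with
    | refl => exact .refl
    | tail _ h ih =>
      rcases fwd _ _ h with h | ⟨rfl, rfl⟩
      · exact ih.tail ((adj_merge _ _ _ _).2 ⟨_, _, h, rfl, rfl⟩)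
      · rw [← mergeV_self]; exact ih

theorem s_reach (hI : Inv_s13 A s e R) {x : V} (hx : x ∈ A.verts) : ReflTransGen A.adj s x := by
  have key : ∀ o, ReflTransGen A.adj s (stl A e o) := fun o => (hI.reach none o).2 (hI.rs o)
  rcases hI.lab x hx with ⟨o, rfl⟩ | ⟨_ | t, rfl⟩
  · exact key o
  · exact .refl
  · exact (key (some t)).tail (Or.inr ⟨t, rfl, rfl⟩)

theorem adj_mem {a b : V} (h : A.adj a b) : a ∈ A.verts ∧ b ∈ A.verts := by
  rcases h with h | ⟨t, rfl, rfl⟩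
  · exact A.unlMem _ h
  · exact ⟨A.stMem t, A.enMem t⟩

theorem s_noin (hI : Inv_s13 A s e R) (w : V) : ¬ A.adj w s := by
  intro h
  exact hI.acyc s (TransGen.tail' (s_reach hI (adj_mem h).1) h)

theorem e_noout (hI : Inv_s13 A s e R) (w : V) : ¬ A.adj e w := by
  have := s_noin hI.rev w
  rwa [adj_rev] at this

theorem inv_r1in (hI : Inv_s13 A s e R) {u v : V} (h : Rule1InCond A u v) :
    Inv_s13 (A.merge u v) (mergeV u v s) (mergeV u v e) R := by
  obtain ⟨hu, hv, hne, htu, htv, hadj⟩ := h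
  have hin : ∀ p y q, mergeV u v y = mergeV u v q → A.adj p q → A.adj p y := by
    intro p y q hyq hpq
    rcases mergeV_eq hyq with rfl | ⟨rfl, rfl⟩ | ⟨rfl, rfl⟩
    · exact hpq
    · exact (hadj p).2 hpq
    · exact (hadj p).1 hpq
  have lift : ∀ c d, TransGen (A.merge u v).adj c d → ∀ y, mergeV u v y = d →
      ∃ a, mergeV u v a = c ∧ TransGen A.adj a y := by
    intro c d h
    induction h with
    | single h =>
      intro y hy
      obtain ⟨p, q, hpq, rfl, rfl⟩ := (adj_merge _ _ _ _).1 h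
      exact ⟨p, rfl, .single (hin p y q hy hpq)⟩
    | tail _ h ih =>
      intro y hy
      obtain ⟨p, q, hpq, rfl, rfl⟩ := (adj_merge _ _ _ _).1 h
      obtain ⟨a, ha, hap⟩ := ih p rfl
      exact ⟨a, ha, hap.tail (hin p y q hy hpq)⟩
  -- neither vertex carries an end label
  have hs : ∀ x y, x ∈ A.verts → y ∈ A.verts → x ≠ y → (∀ w, A.adj w x ↔ A.adj w y) → s ≠ x := by
    rintro x y hx hy hxy ha rfl
    obtain ⟨w, _, hw⟩ := TransGen.tail'_iff.1 (trans_of_ne (s_reach hI hy) hxy)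
    exact s_noin hI w ((ha w).2 hw)
  have hnu : ∀ o, enl A s o ≠ u := by
    rintro (_ | t)
    · exact hs u v hu hv hne hadj
    · exact htu t
  have hnv : ∀ o, enl A s o ≠ v := by
    rintro (_ | t)
    · exact hs v u hv hu hne.symm fun w => (hadj w).symm
    · exact htv t
  refine inv_merge_s13 hI A rfl rfl rfl (fun _ h => h) hu ?_ (fun _ _ h => Or.inl h) ?_
  · intro c hc
    obtain ⟨c', _, hc'⟩ := TransGen.tail'_iff.1 hc
    obtain ⟨_, y, _, _, hy⟩ := (adj_merge _ _ _ _).1 hc'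
    obtain ⟨a, ha, hay⟩ := lift c c hc y hy
    obtain ⟨p, hap, hpy⟩ := TransGen.tail'_iff.1 hay
    exact hI.acyc a (TransGen.tail' hap (hin p a y (ha.trans hy.symm) hpy))
  · intro o o' h
    have huniq : ∀ x, mergeV u v (enl A s o) = mergeV u v x → x = enl A s o := by
      intro x hx
      rcases mergeV_eq hx with h | ⟨h, _⟩ | ⟨h, _⟩
      · exact h.symm
      · exact (hnu o h).elim
      · exact (hnv o h).elim
    rcases reflTransGen_iff_eq_or_transGen.1 h with h | h
    · rw [huniq _ h.symm]
    · obtain ⟨a, ha, hay⟩ := lift _ _ h _ rfl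
      rw [huniq a ha.symm] at hay
      exact hay.to_reflTransGen

theorem inv_r1out (hI : Inv_s13 A s e R) {u v : V} (h : Rule1OutCond A u v) :
    Inv_s13 (A.merge u v) (mergeV u v s) (mergeV u v e) R := by
  have := (inv_r1in hI.rev (rule1in_rev.2 h)).rev
  rwa [← rev_merge, rev_rev] at this

theorem inv_r2 (hI : Inv_s13 A s e R) {u v : V} (h : Rule2Cond A u v) :
    Inv_s13 (A.delUnl u v) s e R := by
  refine ⟨?_, hI.sMem, hI.eMem, hI.lab, ?_, ?_, hI.rs, hI.re⟩
  · intro x hx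
    exact hI.acyc x (TransGen.mono (r := (A.delUnl u v).adj) (fun _ _ h => adj_del_of h) _ _ hx)
  · intro a b hab
    exact hI.unlL a b (Multiset.mem_of_mem_erase hab)
  · intro o o'
    rw [← hI.reach]
    constructor
    · intro hp
      exact ReflTransGen.mono (r := (A.delUnl u v).adj) (fun _ _ h => adj_del_of h) _ _ hp
    · intro hp
      change ReflTransGen (A.delUnl u v).adj (enl A s o) (stl A e o')
      generalize stl A e o' = y at hp ⊢
      induction hp with
      | refl => exact .refl
      | tail _ h' ih =>
        rcases adj_del_or (u := u) (v := v) h' with h' | ⟨rfl, rfl⟩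
        · exact ih.tail h'
        · exact ih.trans h.2.to_reflTransGen

theorem inv_r3 (hI : Inv_s13 A s e R) {u v : V} (h : Rule3Cond A u v) :
    Inv_s13 ((A.delUnl u v).merge u v) (mergeV u v s) (mergeV u v e) R := by
  obtain ⟨huv, hno, h2, h3, h4⟩ := h
  have huv' : A.adj u v := Or.inl huv
  have lift : ∀ c d, TransGen ((A.delUnl u v).merge u v).adj c d →
      ∃ a b, mergeV u v a = c ∧ mergeV u v b = d ∧ TransGen A.adj a b ∧ ¬ (a = u ∧ b = v) := by
    intro c d h
    induction h with
    | single h =>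
      obtain ⟨p, q, hpq, rfl, rfl⟩ := (adj_merge _ _ _ _).1 h
      refine ⟨p, q, rfl, rfl, .single (adj_del_of hpq), ?_⟩
      rintro ⟨rfl, rfl⟩
      exact hno (.single hpq)
    | tail _ h ih =>
      obtain ⟨p, q, hpq, hp, rfl⟩ := (adj_merge _ _ _ _).1 h
      obtain ⟨a, b, rfl, hb, hab, hn⟩ := ih
      rcases mergeV_eq (hb.trans hp.symm) with rfl | ⟨rfl, rfl⟩ | ⟨rfl, rfl⟩
      · refine ⟨a, q, rfl, rfl, hab.tail (adj_del_of hpq), ?_⟩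
        rintro ⟨rfl, rfl⟩
        exact hno (two_path_del hI.acyc hab (.single (adj_del_of hpq)))
      · refine ⟨a, q, rfl, rfl, (hab.tail huv').tail (adj_del_of hpq), ?_⟩
        rintro ⟨rfl, rfl⟩
        exact hI.acyc _ hab
      · obtain ⟨w, haw, hw⟩ := TransGen.tail'_iff.1 hab
        have hwq := h4 w q hw (adj_del_of hpq)
        have hne : w ≠ q := by
          rintro rfl
          exact hno (two_path_del hI.acyc (.single (adj_del_of hpq)) (.single hw))
        refine ⟨a, q, rfl, rfl, TransGen.trans_right haw (trans_of_ne hwq hne), ?_⟩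
        rintro ⟨rfl, rfl⟩
        exact hno (.single hpq)
  have hcross : ∀ o o', enl A s o = v → stl A e o' = u → False := by
    rintro (_ | t) (_ | t') h h'
    · exact s_noin hI u (by rw [show s = v from h]; exact huv')
    · exact s_noin hI u (by rw [show s = v from h]; exact huv')
    · exact e_noout hI v (by rw [show e = u from h']; exact huv')
    · exact (h3 ⟨t, h⟩).1 t' h'
  refine inv_merge_s13 hI (A.delUnl u v) rfl rfl rfl (fun _ h => Multiset.mem_of_mem_erase h)
    (A.unlMem _ huv).1 ?_ (fun _ _ h => adj_del_or h) ?_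
  · intro c hc
    obtain ⟨a, b, ha, hb, hab, hn⟩ := lift c c hc
    rcases mergeV_eq (ha.trans hb.symm) with rfl | h | ⟨rfl, rfl⟩
    · exact hI.acyc _ hab
    · exact hn h
    · exact hI.acyc _ (hab.tail huv')
  · intro o o' h
    rcases reflTransGen_iff_eq_or_transGen.1 h with h | h
    · rcases mergeV_eq h with h | ⟨h, h'⟩ | ⟨h, h'⟩
      · rw [h]
      · exact (hcross o o' h' h).elim
      · rw [h, h']; exact .single huv'
    · obtain ⟨a, b, ha, hb, hab, _⟩ := lift _ _ h
      have hxb : ReflTransGen A.adj (enl A s o) b := by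
        rcases mergeV_eq ha with rfl | ⟨rfl, h'⟩ | ⟨rfl, h'⟩
        · exact hab.to_reflTransGen
        · cases o with
          | none =>
            exact (s_noin hI _ (by rw [show s = v from h']; exact huv')).elim
          | some t =>
            have ht := h3 ⟨t, h'⟩
            obtain ⟨z, hz, hzb⟩ := TransGen.head'_iff.1 hab
            have hzv : z = v := by
              rcases hz with hz | ⟨t', hz, _⟩
              · exact ht.2 z hz
              · exact (ht.1 t' hz).elim
            rw [h', ← hzv]
            exact hzb
        · rw [h']
          exact .head huv' hab.to_reflTransGen
      rcases mergeV_eq hb with rfl | ⟨rfl, h'⟩ | ⟨rfl, h'⟩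
      · exact hxb
      · rw [h']
        exact hxb.tail huv'
      · cases o' with
        | none =>
          exact (e_noout hI _ (by rw [show e = u from h']; exact huv')).elim
        | some t =>
          have ht := h2 ⟨t, h'⟩
          by_cases hx : enl A s o = b
          · exact (hcross o (some t) hx h').elim
          obtain ⟨z, hz, hzb⟩ := TransGen.tail'_iff.1 (trans_of_ne hxb hx)
          have hzv : z = u := by
            rcases hzb with hzb | ⟨t', _, hzb⟩
            · exact ht.2 z hzb
            · exact (ht.1 t' hzb).elim
          rw [h', ← hzv]
          exact hz

theorem inv_step_s13 {B : AOE V T} (hI : Inv_s13 A s e R) (h : Step A B) : ∃ s' e', Inv_s13 B s' e' R := by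
  cases h with
  | rule1out u v h => exact ⟨_, _, inv_r1out hI h⟩
  | rule1in u v h => exact ⟨_, _, inv_r1in hI h⟩
  | rule2 u v h => exact ⟨_, _, inv_r2 hI h⟩
  | rule3 u v h => exact ⟨_, _, inv_r3 hI h⟩

theorem inv_steps {B : AOE V T} (hI : Inv_s13 A s e R) (h : ReflTransGen Step A B) :
    ∃ s' e', Inv_s13 B s' e' R := by
  induction h with
  | refl => exact ⟨s, e, hI⟩
  | tail _ h ih =>
    obtain ⟨_, _, ih⟩ := ih
    exact inv_step_s13 ih h

end steps

theorem reach_from_source {r : V → V → Prop} (S : Finset V) (hr : ∀ a b, r a b → a ∈ S)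
    (hac : ∀ x, ¬ TransGen r x x) (s : V) (hs : ∀ x ∈ S, x ≠ s → ∃ y, r y x) :
    ∀ x ∈ S, ReflTransGen r s x := by
  haveI : IsStrictOrder V (TransGen r) :=
    { irrefl := hac, trans := fun _ _ _ => TransGen.trans }
  have hwf : (S : Set V).WellFoundedOn (TransGen r) := S.finite_toSet.wellFoundedOn
  intro x hx
  refine hwf.induction (P := fun x => ReflTransGen r s x) hx ?_
  intro x hx ih
  by_cases hxs : x = s
  · rw [hxs]
  · obtain ⟨y, hy⟩ := hs x hx hxs
    exact (ih y (hr y x hy) (.single hy)).tail hy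

theorem inv_canonical_s13 [Fintype T] {G : AOE V T} (h : Canonical G) : ∃ s e R, Inv_s13 G s e R := by
  obtain ⟨hac, _, _, _, _, s, e, hse, hs, he, hst, hverts, hmid, hsrc, hsnk⟩ := h
  have hv : ∀ x ∈ G.verts, x = s ∨ x = e ∨ (∃ t, G.St t = x) ∨ ∃ t, G.En t = x := by
    intro x hx
    rw [hverts] at hx
    simpa using hx
  have hsr : ∀ x ∈ G.verts, ReflTransGen G.adj s x := by
    refine reach_from_source G.verts (fun a b h => (adj_mem h).1) hac s ?_
    intro x hx hxs
    by_contra hno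
    push Not at hno
    exact hno s (Or.inl ((hsrc x).2 ⟨hx, hxs, fun t ht => hno _ (Or.inr ⟨t, rfl, ht⟩),
      fun a ha => (hno a (Or.inl ha)).elim⟩))
  have her : ∀ x ∈ G.verts, ReflTransGen G.adj x e := by
    intro x hx
    rw [← reflTransGen_swap]
    refine reach_from_source (r := Function.swap G.adj) G.verts (fun a b h => (adj_mem h).2) ?_ e
      ?_ x hx
    · intro x hx
      rw [transGen_swap] at hx
      exact hac x hx
    intro x hx hxs
    by_contra hno
    push Not at hno
    exact hno e (Or.inl ((hsnk x).2 ⟨hx, hxs, fun t ht => hno _ (Or.inr ⟨t, ht, rfl⟩),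
      fun a ha => (hno a (Or.inl ha)).elim⟩))
  refine ⟨s, e, fun o o' => ReflTransGen G.adj (enl G s o) (stl G e o'), hac, hs, he, ?_, ?_,
    fun _ _ => Iff.rfl, ?_, ?_⟩
  · intro x hx
    rcases hv x hx with rfl | rfl | ⟨t, ht⟩ | ⟨t, ht⟩
    · exact Or.inr ⟨none, rfl⟩
    · exact Or.inl ⟨none, rfl⟩
    · exact Or.inl ⟨some t, ht⟩
    · exact Or.inr ⟨some t, ht⟩
  · intro a b hab
    have hane : a ≠ e := by
      rintro rfl
      exact hac a (TransGen.head' (Or.inl hab) (her b (G.unlMem _ hab).2))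
    have hbne : b ≠ s := by
      rintro rfl
      exact hac b (TransGen.tail' (hsr a (G.unlMem _ hab).1) (Or.inl hab))
    constructor
    · by_cases has : a = s
      · exact ⟨none, has.symm⟩
      · by_cases hbe : b = e
        · subst hbe
          have h1 := (hsnk a).1 hab
          rcases hv a h1.1 with h | h | ⟨t, h⟩ | ⟨t, h⟩
          · exact (has h).elim
          · exact (hane h).elim
          · exact (h1.2.2.1 t h).elim
          · exact ⟨some t, h⟩
        · obtain ⟨⟨t, ht⟩, _⟩ := hmid a b hab has hbe
          exact ⟨some t, ht⟩
    · by_cases hbe : b = e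
      · exact ⟨none, hbe.symm⟩
      · by_cases has : a = s
        · subst has
          have h1 := (hsrc b).1 hab
          rcases hv b h1.1 with h | h | ⟨t, h⟩ | ⟨t, h⟩
          · exact (hbne h).elim
          · exact (hbe h).elim
          · exact ⟨some t, h⟩
          · exact (h1.2.2.1 t h).elim
        · obtain ⟨_, ⟨t, ht⟩⟩ := hmid a b hab has hbe
          exact ⟨some t, ht⟩
  · rintro (_ | t)
    · exact hsr e he
    · exact hsr _ (G.stMem t)
  · rintro (_ | t)
    · exact her s hs
    · exact her _ (G.enMem t)

end helpers

/-- The algorithm's output is independent of the order of rule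
applications: any two outputs obtained from the same canonical AOE are isomorphic via a
bijection of their vertex sets that identifies each task's start and end vertices and
matches the unlabeled edges. -/
theorem stmt13 {V T : Type} [DecidableEq V] [Fintype T] (G A₁ A₂ : AOE V T)
    (h₁ : IsOutput G A₁) (h₂ : IsOutput G A₂) :
    ∃ φ : V → V, Set.BijOn φ ↑A₁.verts ↑A₂.verts ∧
      (∀ t, φ (A₁.St t) = A₂.St t) ∧ (∀ t, φ (A₁.En t) = A₂.En t) ∧
      A₂.unl = A₁.unl.map fun e : V × V => (φ e.1, φ e.2) := by
  obtain ⟨s, e, R, hI⟩ := inv_canonical_s13 h₁.1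
  obtain ⟨_, _, hI₁⟩ := inv_steps hI h₁.2.1
  obtain ⟨_, _, hI₂⟩ := inv_steps hI h₂.2.1
  exact iso_of_nf hI₁ hI₂ h₁.2.2 h₂.2.2

end AOEPaper
end
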